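/- For every α with 0<α<1 there exists a constant M > 0 such that |E_α(−x)| ≤ M/(1+x) for all x ≥ 0; in particular |E_α(−x)| ≤ M for all x ≥ 0. -/

import Mathlib

open Set Filter

/-- The Mittag-Leffler function `E_α(z) = ∑_{k≥0} z^k/Γ(αk+1)`. -/
noncomputable def ml (α z : ℝ) : ℝ := ∑' k : ℕ, z ^ k / Real.Gamma (α * k + 1)

/-- The power series of `(1 - X) ^ r`. -/
noncomputable def mlP (r : ℝ) : PowerSeries ℝ :=
  PowerSeries.rescale (-1 : ℝ) (PowerSeries.binomialSeries ℝ r)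

lemma mlP_add (r s : ℝ) : mlP (r + s) = mlP r * mlP s := by
  simp [mlP]

lemma mlP_zero : mlP 0 = 1 := by
  simp [mlP]

lemma mlP_one : mlP 1 = 1 - PowerSeries.X := by
  have h := PowerSeries.binomialSeries_nat (R := ℝ) (A := ℝ) 1
  rw [Nat.cast_one, pow_one] at h
  rw [mlP, h]
  simp [PowerSeries.rescale_X, sub_eq_add_neg]

lemma mlP_coeff_zero (r : ℝ) : PowerSeries.coeff 0 (mlP r) = 1 := by
  simp [mlP]

lemma mlP_coeff_succ (r : ℝ) (n : ℕ) :
    PowerSeries.coeff (n + 1) (mlP r) = PowerSeries.coeff n (mlP r) * ((n - r) / (n + 1)) := by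
  simp only [mlP, PowerSeries.coeff_rescale, PowerSeries.binomialSeries_coeff, smul_eq_mul, mul_one]
  have h1 := Ring.descPochhammer_eq_factorial_smul_choose r (n + 1)
  have h2 := Ring.descPochhammer_eq_factorial_smul_choose r n
  rw [descPochhammer_succ_right, Polynomial.smeval_mul, h2] at h1
  simp [Polynomial.smeval_sub, Polynomial.smeval_natCast, Nat.factorial_succ] at h1
  have h3 : (n.factorial : ℝ) ≠ 0 := by positivity
  have h4 : (n : ℝ) + 1 ≠ 0 := by positivity
  have h5 : Ring.choose r n * (r - n) = (n + 1) * Ring.choose r (n + 1) := by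
    apply mul_left_cancel₀ h3
    linear_combination h1
  field_simp
  rw [pow_succ]
  linear_combination (-1) ^ n * h5

lemma mlP_coeff_nonneg (r : ℝ) (hr : r ≤ 0) (n : ℕ) : 0 ≤ PowerSeries.coeff n (mlP r) := by
  induction n with
  | zero => rw [mlP_coeff_zero]; norm_num
  | succ n ih =>
    rw [mlP_coeff_succ]
    have : (0 : ℝ) ≤ n := n.cast_nonneg
    exact mul_nonneg ih (div_nonneg (by linarith) (by linarith))

lemma mlP_coeff_nonpos (a : ℝ) (h0 : 0 < a) (h1 : a < 1) (n : ℕ) :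
    PowerSeries.coeff (n + 1) (mlP a) ≤ 0 := by
  induction n with
  | zero => rw [mlP_coeff_succ, mlP_coeff_zero]; simp; linarith
  | succ n ih =>
    rw [mlP_coeff_succ]
    have : (0 : ℝ) ≤ n := n.cast_nonneg
    exact mul_nonpos_of_nonpos_of_nonneg ih
      (div_nonneg (by push_cast; linarith) (by push_cast; linarith))

lemma mlP_neg_one_coeff (n : ℕ) : PowerSeries.coeff n (mlP (-1)) = 1 := by
  induction n with
  | zero => rw [mlP_coeff_zero]
  | succ n ih =>
    rw [mlP_coeff_succ, ih]
    have h4 : (n : ℝ) + 1 ≠ 0 := by positivity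
    field_simp
    ring

lemma mlP_coeff_le (s : ℝ) (hs : 0 ≤ s) (n : ℕ) :
    PowerSeries.coeff n (mlP (-s - 1)) ≤ (1 + s) ^ n := by
  induction n with
  | zero => rw [mlP_coeff_zero]; simp
  | succ n ih =>
    rw [mlP_coeff_succ, pow_succ]
    have : (0 : ℝ) ≤ n := n.cast_nonneg
    apply mul_le_mul ih _ (div_nonneg (by linarith) (by linarith)) (by positivity)
    rw [div_le_iff₀ (by linarith)]
    nlinarith

/-- Nonnegativity of solutions of the discrete Volterra equation. -/
lemma ml_discrete_nonneg (a l : ℝ) (h0 : 0 < a) (h1 : a < 1) (hl : 0 ≤ l)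
    (Y R : PowerSeries ℝ) (h : (mlP a + PowerSeries.C l) * Y = R)
    (hR : ∀ n, 0 ≤ PowerSeries.coeff n R) (n : ℕ) : 0 ≤ PowerSeries.coeff n Y := by
  induction n using Nat.strong_induction_on with
  | _ n ih =>
    have e := congrArg (PowerSeries.coeff n) h
    rw [add_mul, map_add, PowerSeries.coeff_C_mul, PowerSeries.coeff_mul,
      Finset.Nat.sum_antidiagonal_eq_sum_range_succ_mk, Finset.sum_range_succ', mlP_coeff_zero] at e
    have hs : ∑ i ∈ Finset.range n, PowerSeries.coeff (i + 1) (mlP a) *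
        PowerSeries.coeff (n - (i + 1)) Y ≤ 0 := by
      apply Finset.sum_nonpos
      intro i hi
      rw [Finset.mem_range] at hi
      exact mul_nonpos_of_nonpos_of_nonneg (mlP_coeff_nonpos a h0 h1 i) (ih _ (by omega))
    have := hR n
    simp only [Nat.sub_zero] at e
    by_contra hc
    push Not at hc
    nlinarith

lemma ml_summable_aux (a q : ℝ) (h0 : 0 < a) (h1 : a < 1) (hq : 0 ≤ q) (hq1 : q < 1) (m : ℕ) :
    Summable (fun k : ℕ => q ^ k * (1 + a * k) ^ m) := by
  have s1 := summable_pow_mul_geometric_of_norm_lt_one (R := ℝ) m (r := q)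
    (by rw [Real.norm_of_nonneg hq]; exact hq1)
  have s2 := summable_geometric_of_lt_one hq hq1
  refine Summable.of_nonneg_of_le (fun k => by positivity) (fun k => ?_)
    ((s1.add s2).mul_left (2 ^ (m - 1)))
  have hk : (0 : ℝ) ≤ k := k.cast_nonneg
  have e1 : (1 + a * k) ^ m ≤ ((k : ℝ) + 1) ^ m := by
    apply pow_le_pow_left₀ (by positivity)
    nlinarith
  have e2 := add_pow_le hk zero_le_one m
  rw [one_pow] at e2
  calc q ^ k * (1 + a * k) ^ m ≤ q ^ k * (2 ^ (m - 1) * ((k : ℝ) ^ m + 1)) := by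
        gcongr; exact e1.trans e2
    _ = _ := by ring

/-- The terms of the discrete Mittag-Leffler function. -/
noncomputable def mlT (a l : ℝ) (n k : ℕ) : ℝ :=
  (-l) ^ k * PowerSeries.coeff n (mlP (-(a * k) - 1))

lemma mlT_summable (a l : ℝ) (h0 : 0 < a) (h1 : a < 1) (hl : 0 ≤ l) (hl1 : l < 1) (n : ℕ) :
    Summable (mlT a l n) := by
  refine Summable.of_norm_bounded (ml_summable_aux a l h0 h1 hl hl1 n) (fun k => ?_)
  have hs : 0 ≤ a * k := by positivity
  rw [mlT, norm_mul, norm_pow, norm_neg, Real.norm_of_nonneg hl,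
    Real.norm_of_nonneg (mlP_coeff_nonneg _ (by linarith) n)]
  gcongr
  exact mlP_coeff_le _ hs n

set_option maxHeartbeats 1000000 in
lemma ml_discrete_bound (a l : ℝ) (h0 : 0 < a) (h1 : a < 1) (hl : 0 ≤ l) (hl1 : l < 1) (n : ℕ) :
    0 ≤ ∑' k, mlT a l n k ∧
      (∑' k, mlT a l n k) * (1 + l * PowerSeries.coeff n (mlP (-a - 1))) ≤ 1 := by
  set U : PowerSeries ℝ := PowerSeries.mk (fun n => ∑' k, mlT a l n k) with hUdef
  have hUc : ∀ n, PowerSeries.coeff n U = ∑' k, mlT a l n k := fun n => by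
    rw [hUdef, PowerSeries.coeff_mk]
  have hsum := mlT_summable a l h0 h1 hl hl1
  have hU : (mlP a + PowerSeries.C l) * U = mlP (a - 1) := by
    ext n
    rw [add_mul, map_add, PowerSeries.coeff_C_mul, PowerSeries.coeff_mul, hUc]
    have e1 : ∑ p ∈ Finset.HasAntidiagonal.antidiagonal n, PowerSeries.coeff p.1 (mlP a) * PowerSeries.coeff p.2 U
        = ∑' k : ℕ, (-l) ^ k * PowerSeries.coeff n (mlP (a - a * k - 1)) := by
      simp_rw [hUc, ← tsum_mul_left]
      have hs' : ∀ p ∈ Finset.HasAntidiagonal.antidiagonal n, Summable (fun k : ℕ =>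
          PowerSeries.coeff p.1 (mlP a) * mlT a l p.2 k) :=
        fun p _ => (hsum p.2).mul_left (PowerSeries.coeff p.1 (mlP a))
      rw [← Summable.tsum_finsetSum hs']
      congr 1
      ext k
      rw [show a - a * k - 1 = a + (-(a * k) - 1) by ring, mlP_add, PowerSeries.coeff_mul,
        Finset.mul_sum]
      apply Finset.sum_congr rfl
      intro p _
      rw [mlT]; ring
    have e2 : ∀ k : ℕ, (-l) ^ (k + 1) *
        PowerSeries.coeff n (mlP (a - a * ((k + 1 : ℕ) : ℝ) - 1)) = -l * mlT a l n k := by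
      intro k
      rw [mlT, show a - a * ((k + 1 : ℕ) : ℝ) - 1 = -(a * k) - 1 by push_cast; ring]
      ring
    have e3 : Summable (fun k : ℕ => (-l) ^ k *
        PowerSeries.coeff n (mlP (a - a * (k : ℝ) - 1))) := by
      rw [← summable_nat_add_iff 1]
      simp_rw [e2]
      exact (hsum n).mul_left _
    rw [e1, e3.tsum_eq_zero_add]
    simp_rw [e2]
    rw [tsum_mul_left]
    simp
  have hU0 : ∀ n, 0 ≤ PowerSeries.coeff n U :=
    ml_discrete_nonneg a l h0 h1 hl U _ hU (mlP_coeff_nonneg _ (by linarith))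
  have hW : (mlP a + PowerSeries.C l) * (1 - mlP 1 * U) = PowerSeries.C l := by
    have : mlP a = mlP 1 * mlP (a - 1) := by rw [← mlP_add]; congr 1; ring
    linear_combination (- mlP 1) * hU + this
  have hW0 := ml_discrete_nonneg a l h0 h1 hl _ _ hW (fun n => by
    rw [PowerSeries.coeff_C]; split_ifs <;> simp [hl])
  have hmono : Antitone (fun n => PowerSeries.coeff n U) := by
    apply antitone_nat_of_succ_le
    intro n
    have := hW0 (n + 1)
    rw [mlP_one, sub_mul, one_mul, map_sub, map_sub, PowerSeries.coeff_succ_X_mul,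
      PowerSeries.coeff_one, if_neg (by omega)] at this
    linarith
  have hV : U + PowerSeries.C l * (mlP (-a) * U) = mlP (-1) := by
    have t1 : mlP (-a) * mlP a = 1 := by rw [← mlP_add]; simp [mlP_zero]
    have t2 : mlP (-a) * mlP (a - 1) = mlP (-1) := by rw [← mlP_add]; congr 1; ring
    linear_combination mlP (-a) * hU - U * t1 + t2
  have hV' := congrArg (PowerSeries.coeff n) hV
  rw [map_add, PowerSeries.coeff_C_mul, PowerSeries.coeff_mul, mlP_neg_one_coeff] at hV'
  have hc : PowerSeries.coeff n (mlP (-a - 1)) =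
      ∑ p ∈ Finset.HasAntidiagonal.antidiagonal n, PowerSeries.coeff p.1 (mlP (-a)) := by
    rw [sub_eq_add_neg, mlP_add, PowerSeries.coeff_mul]
    simp [mlP_neg_one_coeff]
  have hle : PowerSeries.coeff n U * PowerSeries.coeff n (mlP (-a - 1)) ≤
      ∑ p ∈ Finset.HasAntidiagonal.antidiagonal n, PowerSeries.coeff p.1 (mlP (-a)) * PowerSeries.coeff p.2 U := by
    rw [hc, Finset.mul_sum]
    apply Finset.sum_le_sum
    intro p hp
    rw [mul_comm]
    apply mul_le_mul_of_nonneg_left _ (mlP_coeff_nonneg _ (by linarith) _)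
    exact hmono (by have := Finset.HasAntidiagonal.mem_antidiagonal.mp hp; omega)
  rw [← hUc]
  refine ⟨hU0 n, ?_⟩
  nlinarith [mul_le_mul_of_nonneg_left hle hl]

lemma mlP_gammaSeq (s : ℝ) (hs : 0 < s) (n : ℕ) :
    (n : ℝ) ^ s = PowerSeries.coeff n (mlP (-s - 1)) * (s * Real.GammaSeq s n) := by
  have key : ∏ j ∈ Finset.range (n + 1), (s + j) =
      PowerSeries.coeff n (mlP (-s - 1)) * s * n.factorial := by
    induction n with
    | zero => simp [mlP_coeff_zero]
    | succ n ih =>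
      rw [Finset.prod_range_succ, ih, mlP_coeff_succ, Nat.factorial_succ]
      have h4 : (n : ℝ) + 1 ≠ 0 := by positivity
      push_cast
      field_simp
      ring
  have hpos : 0 < ∏ j ∈ Finset.range (n + 1), (s + j) := by
    apply Finset.prod_pos
    intro j _
    positivity
  rw [Real.GammaSeq, mul_div_assoc', mul_div_assoc', eq_div_iff hpos.ne', key]
  ring

lemma mlP_tendsto (s : ℝ) (hs : 0 ≤ s) :
    Tendsto (fun n : ℕ => PowerSeries.coeff n (mlP (-s - 1)) / (n : ℝ) ^ s) atTop
      (nhds (1 / Real.Gamma (s + 1))) := by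
  rcases hs.eq_or_lt with rfl | hs
  · simp [mlP_neg_one_coeff]
  · rw [Real.Gamma_add_one hs.ne']
    have h := ((Real.GammaSeq_tendsto_Gamma s).const_mul s).inv₀
      (mul_ne_zero hs.ne' (Real.Gamma_pos_of_pos hs).ne')
    rw [one_div]
    refine h.congr' ?_
    filter_upwards [eventually_gt_atTop 0] with n hn
    have hp : 0 < (n : ℝ) ^ s := Real.rpow_pos_of_pos (by exact_mod_cast hn) _
    have e := mlP_gammaSeq s hs n
    have hne : s * Real.GammaSeq s n ≠ 0 := by
      intro h0
      rw [h0, mul_zero] at e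
      exact hp.ne' e
    rw [eq_div_iff hp.ne', e, mul_comm, mul_assoc, mul_inv_cancel₀ hne, mul_one]

lemma mlP_div_anti (s : ℝ) (hs : 0 ≤ s) (m n : ℕ) (hm : 0 < m) (hmn : m ≤ n) :
    PowerSeries.coeff n (mlP (-s - 1)) / (n : ℝ) ^ s ≤
      PowerSeries.coeff m (mlP (-s - 1)) / (m : ℝ) ^ s := by
  induction n, hmn using Nat.le_induction with
  | base => exact le_rfl
  | succ n hmn ih =>
    refine le_trans ?_ ih
    have hn : (0 : ℝ) < n := by exact_mod_cast hm.trans_le hmn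
    have hp : 0 < (n : ℝ) ^ s := Real.rpow_pos_of_pos hn _
    have hp' : 0 < ((n + 1 : ℕ) : ℝ) ^ s := Real.rpow_pos_of_pos (by positivity) _
    have hc := mlP_coeff_nonneg (-s - 1) (by linarith) n
    have hlog := Real.one_sub_inv_le_log_of_pos (x := ((n : ℝ) + 1) / n) (by positivity)
    have key : ((n : ℝ) - (-s - 1)) / (n + 1) ≤ (((n : ℝ) + 1) / n) ^ s := by
      rw [Real.rpow_def_of_pos (by positivity)]
      refine le_trans ?_ (Real.add_one_le_exp _)
      have : ((n : ℝ) - (-s - 1)) / (n + 1) = (1 - (((n : ℝ) + 1) / n)⁻¹) * s + 1 := by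
        field_simp
        ring
      rw [this]
      gcongr
    rw [Real.div_rpow (by positivity) hn.le, le_div_iff₀ hp] at key
    rw [mlP_coeff_succ, div_le_div_iff₀ hp' hp, mul_assoc]
    push_cast
    exact mul_le_mul_of_nonneg_left key hc

lemma mlT_eq (a x : ℝ) (n k : ℕ) :
    mlT a (x / (n : ℝ) ^ a) n k =
      (-x) ^ k * (PowerSeries.coeff n (mlP (-(a * k) - 1)) / (n : ℝ) ^ (a * k)) := by
  rw [mlT, Real.rpow_mul_natCast n.cast_nonneg, ← neg_div, div_pow]
  ring

lemma ml_tendsto (a x : ℝ) (h0 : 0 < a) (h1 : a < 1) (hx : 0 ≤ x) (m : ℕ) (hm : 0 < m)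
    (hxm : x / (m : ℝ) ^ a < 1) :
    Tendsto (fun n : ℕ => ∑' k, mlT a (x / (n : ℝ) ^ a) n k) atTop (nhds (ml a (-x))) := by
  rw [ml]
  refine tendsto_tsum_of_dominated_convergence
    (ml_summable_aux a (x / (m : ℝ) ^ a) h0 h1 (by positivity) hxm m) (fun k => ?_) ?_
  · simp_rw [mlT_eq]
    have := (mlP_tendsto (a * k) (by positivity)).const_mul ((-x) ^ k)
    rwa [mul_one_div] at this
  · filter_upwards [eventually_ge_atTop m] with n hn k
    have hs : 0 ≤ a * k := by positivity
    have hm' : (0 : ℝ) < m := by exact_mod_cast hm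
    have hc := mlP_coeff_nonneg (-(a * k) - 1) (by linarith) n
    rw [mlT_eq, norm_mul, norm_pow, norm_neg, Real.norm_of_nonneg hx,
      Real.norm_of_nonneg (by positivity), div_pow, ← Real.rpow_mul_natCast hm'.le]
    calc _ ≤ x ^ k * ((1 + a * k) ^ m / (m : ℝ) ^ (a * k)) := by
          refine mul_le_mul_of_nonneg_left ?_ (by positivity)
          refine (mlP_div_anti _ hs m n hm hn).trans ?_
          gcongr
          exact mlP_coeff_le _ hs m
      _ = _ := by ring

/-- for `0<α<1` there is `M > 0` with `|E_α(−x)| ≤ M/(1+x)` for all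
`x ≥ 0`; in particular `|E_α(−x)| ≤ M` for all `x ≥ 0`. -/
theorem mittagLeffler_bound (α : ℝ) (hα : 0 < α) (hα1 : α < 1) :
    ∃ M : ℝ, 0 < M ∧
      (∀ x : ℝ, 0 ≤ x → |ml α (-x)| ≤ M / (1 + x)) ∧
      (∀ x : ℝ, 0 ≤ x → |ml α (-x)| ≤ M) := by
  have hG : 0 < Real.Gamma (α + 1) := Real.Gamma_pos_of_pos (by linarith)
  have key : ∀ x : ℝ, 0 ≤ x → 0 ≤ ml α (-x) ∧
      ml α (-x) * (1 + x * (1 / Real.Gamma (α + 1))) ≤ 1 := by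
    intro x hx
    have hlim : Tendsto (fun n : ℕ => x / (n : ℝ) ^ α) atTop (nhds 0) :=
      ((tendsto_rpow_atTop hα).comp tendsto_natCast_atTop_atTop).const_div_atTop x
    have hev := hlim.eventually (gt_mem_nhds (zero_lt_one (α := ℝ)))
    obtain ⟨m, hm1, hm⟩ := (hev.and (eventually_gt_atTop 0)).exists
    have ht := ml_tendsto α x hα hα1 hx m hm hm1
    have hb : ∀ᶠ n : ℕ in atTop, _ := hev.mono fun n hn =>
      ml_discrete_bound α (x / (n : ℝ) ^ α) hα hα1 (by positivity) hn n
    refine ⟨ge_of_tendsto ht (hb.mono fun n h => h.1), ?_⟩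
    have ht2 := ht.mul (((mlP_tendsto α hα.le).const_mul x).const_add 1)
    refine le_of_tendsto ht2 (hb.mono fun n h => ?_)
    have := h.2
    rwa [div_mul_eq_mul_div, ← mul_div_assoc'] at this
  have main : ∀ x : ℝ, 0 ≤ x → |ml α (-x)| ≤ (1 + Real.Gamma (α + 1)) / (1 + x) := by
    intro x hx
    obtain ⟨k0, k1⟩ := key x hx
    rw [abs_of_nonneg k0, le_div_iff₀ (by linarith)]
    have e : ml α (-x) * x = Real.Gamma (α + 1) * (ml α (-x) * (x * (1 / Real.Gamma (α + 1)))) := by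
      field_simp
    have k2 : 0 ≤ ml α (-x) * (x * (1 / Real.Gamma (α + 1))) := by positivity
    have k3 : ml α (-x) * (x * (1 / Real.Gamma (α + 1))) ≤ 1 := by linarith
    have k4 := mul_le_mul_of_nonneg_left k3 hG.le
    linarith
  refine ⟨1 + Real.Gamma (α + 1), by linarith, main, fun x hx => (main x hx).trans ?_⟩
  exact div_le_self (by linarith) (by linarith)
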